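/- Deligne's observation: Let d : H → H be a k-linear map with d(H^m) ⊆ H^{m-1} for all m which commutes with the Lefschetz operator, i.e. d∘L = L∘d. Then d = 0. -/

import Mathlib

/-!
Hard Lefschetz moves a vector of `H^{n-i}` past the middle degree and back down into a lower degree.
For `d` of degree `-r` with `r > 0` and `x ∈ H^{n-i}`, the vector `L^{i+r} x` lies in
`H^{n+i+2r}`, so it equals `L^{i+2r} y` for some `y ∈ H^{n-i-2r}`. If `d` already vanishes on that
lower degree, then `L^{i+r} (d x) = L^{i+2r} (d y) = 0`. But `d x ∈ H^{n-i-r}`, where `L^{i+r}` is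
injective, so `d x = 0`. Starting from the bottom degree, `d` vanishes on every `H^{n-i}`, and
therefore also on `H^{n+i} = L^i H^{n-i}`.
-/

section DegreeShift

variable {ι k V : Type*} [AddMonoid ι] [Semiring k] [AddCommMonoid V] [Module k V]

theorem map_pow_le_of_map_le {H : ι → Submodule k V} {f : Module.End k V} {c : ι}
    (hf : ∀ m, (H m).map f ≤ H (m + c)) (i : ℕ) (m : ι) :
    (H m).map (f ^ i) ≤ H (m + i • c) := by
  induction i with
  | zero => simp [Module.End.one_eq_id]
  | succ i ih =>
    calc (H m).map (f ^ (i + 1))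
        = ((H m).map (f ^ i)).map f := by
          rw [pow_succ', Module.End.mul_eq_comp, Submodule.map_comp]
      _ ≤ (H (m + i • c)).map f := Submodule.map_mono ih
      _ ≤ H (m + i • c + c) := hf _
      _ = H (m + (i + 1) • c) := by rw [succ_nsmul, add_assoc]

end DegreeShift

section HardLefschetz

variable {k V : Type*} [Ring k] [AddCommGroup V] [Module k V]

/-- The hard Lefschetz property, centred in degree `n`, of an operator `L` of degree `2` on the
family of graded pieces `H`. The isomorphisms are required for every `i : ℕ`; for pieces
concentrated in degrees `0, …, 2n` those with `i > n` are isomorphisms between zero spaces. -/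
structure HardLefschetz (H : ℤ → Submodule k V) (L : Module.End k V) (n : ℤ) : Prop where
  map_le (m : ℤ) : (H m).map L ≤ H (m + 2)
  bijOn_pow (i : ℕ) : Set.BijOn (L ^ i) (H (n - i)) (H (n + i))

namespace HardLefschetz

theorem of_bounded {H : ℤ → Submodule k V} {L : Module.End k V} {n : ℕ}
    (hbound : ∀ m : ℤ, ¬(0 ≤ m ∧ m ≤ 2 * (n : ℤ)) → H m = ⊥)
    (hL : ∀ m, (H m).map L ≤ H (m + 2))
    (hsurj : ∀ i : ℕ, i ≤ n → (H ((n : ℤ) - i)).map (L ^ i) = H ((n : ℤ) + i))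
    (hinj : ∀ i : ℕ, i ≤ n → ∀ x ∈ H ((n : ℤ) - i), (L ^ i) x = 0 → x = 0) :
    HardLefschetz H L n where
  map_le := hL
  bijOn_pow i := by
    rcases le_or_gt i n with hi | hi
    · rw [← hsurj i hi, Submodule.map_coe]
      exact (LinearMap.injOn_of_disjoint_ker subset_rfl
        (LinearMap.disjoint_ker.2 (hinj i hi))).bijOn_image
    · rw [hbound (n - i) (by omega), hbound (n + i) (by omega)]
      simp [Set.bijOn_singleton]

variable {H : ℤ → Submodule k V} {L d : Module.End k V} {n a : ℤ} {r : ℕ}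

theorem upper_le_ker_of_lower_le_ker (hHL : HardLefschetz H L n) (hcomm : Commute L d) {i : ℕ}
    (hker : H (n - i) ≤ d.ker) : H (n + i) ≤ d.ker := by
  intro x hx
  obtain ⟨y, hy, rfl⟩ := (hHL.bijOn_pow i).surjOn hx
  calc d ((L ^ i) y) = (L ^ i) (d y) := (LinearMap.congr_fun (hcomm.pow_left i) y).symm
    _ = 0 := by rw [LinearMap.mem_ker.1 (hker hy), map_zero]

theorem lower_le_ker_of_lower_add_le_ker (hHL : HardLefschetz H L n) (hcomm : Commute L d)
    (hd : ∀ m, (H m).map d ≤ H (m - r)) {i : ℕ}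
    (hker : H (n - ↑(i + 2 * r)) ≤ d.ker) : H (n - i) ≤ d.ker := by
  intro x hx
  have hLx : (L ^ (i + r)) x ∈ H (n + ↑(i + 2 * r)) := by
    have h := map_pow_le_of_map_le hHL.map_le (i + r) _ (Submodule.mem_map_of_mem hx)
    convert h using 2
    push_cast [nsmul_eq_mul]
    ring
  have hdx : d x ∈ H (n - ↑(i + r)) := by
    have h := hd _ (Submodule.mem_map_of_mem hx)
    rwa [sub_sub, ← Nat.cast_add] at h
  have hLdx : (L ^ (i + r)) (d x) = 0 :=
    calc (L ^ (i + r)) (d x) = d ((L ^ (i + r)) x) :=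
          LinearMap.congr_fun (hcomm.pow_left (i + r)) x
      _ = 0 := hHL.upper_le_ker_of_lower_le_ker hcomm hker hLx
  exact (hHL.bijOn_pow (i + r)).injOn hdx (zero_mem _) (by rw [hLdx, map_zero])

theorem lower_le_ker (hHL : HardLefschetz H L n) (hbelow : ∀ m < a, H m = ⊥)
    (hcomm : Commute L d) (hr : 0 < r) (hd : ∀ m, (H m).map d ≤ H (m - r)) (i : ℕ) :
    H (n - i) ≤ d.ker := by
  rcases lt_or_ge (n - i) a with hlt | _
  · exact (hbelow _ hlt).trans_le bot_le
  · exact hHL.lower_le_ker_of_lower_add_le_ker hcomm hd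
      (hHL.lower_le_ker hbelow hcomm hr hd (i + 2 * r))
termination_by (n + 1 - i - a).toNat

theorem le_ker (hHL : HardLefschetz H L n) (hbelow : ∀ m < a, H m = ⊥)
    (hcomm : Commute L d) (hr : 0 < r) (hd : ∀ m, (H m).map d ≤ H (m - r)) (m : ℤ) :
    H m ≤ d.ker := by
  have hlower := hHL.lower_le_ker hbelow hcomm hr hd
  rcases le_total m n with hm | hm
  · obtain ⟨i, rfl⟩ : ∃ i : ℕ, m = n - i := ⟨(n - m).toNat, by omega⟩
    exact hlower i
  · obtain ⟨i, rfl⟩ : ∃ i : ℕ, m = n + i := ⟨(m - n).toNat, by omega⟩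
    exact hHL.upper_le_ker_of_lower_le_ker hcomm (hlower i)

end HardLefschetz

theorem deligne_observation_general {H : ℤ → Submodule k V} {L d : Module.End k V} {n a : ℤ}
    {r : ℕ} (hH : ⨆ m, H m = ⊤) (hbelow : ∀ m < a, H m = ⊥) (hHL : HardLefschetz H L n)
    (hr : 0 < r) (hd : ∀ m, (H m).map d ≤ H (m - r)) (hcomm : Commute L d) :
    d = 0 := by
  rw [← LinearMap.ker_eq_top, eq_top_iff, ← hH]
  exact iSup_le (hHL.le_ker hbelow hcomm hr hd)

end HardLefschetz

/-- **Deligne's observation.**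
Let `H = ⊕ₘ Hᵐ` be a graded `k`-vector space (each piece finite dimensional,
concentrated in degrees `0 ≤ m ≤ 2n`), and let `L` be a Lefschetz operator of degree `+2`
satisfying hard Lefschetz. If `d : H → H` is a `k`-linear map of degree `-1`
(`d(Hᵐ) ⊆ H^{m-1}`) commuting with `L`, then `d = 0`. -/
theorem deligne_observation
    (k V : Type*) [Field k] [AddCommGroup V] [Module k V]
    (n : ℕ) (H : ℤ → Submodule k V)
    (hfin : ∀ m : ℤ, FiniteDimensional k (H m))
    (hbound : ∀ m : ℤ, ¬(0 ≤ m ∧ m ≤ 2 * (n : ℤ)) → H m = ⊥)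
    (hinternal : DirectSum.IsInternal H)
    (L : V →ₗ[k] V)
    (hL : ∀ m : ℤ, (H m).map L ≤ H (m + 2))
    (hHLsurj : ∀ i : ℕ, i ≤ n → (H ((n : ℤ) - i)).map (L ^ i) = H ((n : ℤ) + i))
    (hHLinj : ∀ i : ℕ, i ≤ n → ∀ x ∈ H ((n : ℤ) - i), (L ^ i) x = 0 → x = 0)
    (d : V →ₗ[k] V)
    (hd : ∀ m : ℤ, (H m).map d ≤ H (m - 1))
    (hcomm : d ∘ₗ L = L ∘ₗ d) :
    d = 0 := by
  exact deligne_observation_general hinternal.submodule_iSup_eq_top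
    (fun m (hm : m < 0) => hbound m (by omega)) (.of_bounded hbound hL hHLsurj hHLinj)
    one_pos (by simpa using hd) hcomm.symm
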